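/- Let n ≥ 1 and suppose ψ is a maximal differentiable solution of ψ'(x) = (2√(n+1)/(1+x²))·(1+ψ(x)²)·(1 − ((2n−1−x²)/(2√(n+1)·x))·ψ(x)) defined near some x₀ ∈ (0, √(2n−1)) with ψ(x₀) < 0. Then there exists x₁ ∈ (0, x₀) with ψ(x) → −∞ as x ↓ x₁. -/

import Mathlib

open Real Set Filter

/-!
While `ψ` is negative it lies below the nullcline, which is positive on `(0, √(2n−1))`, so `ψ' > 0`:
going backwards, `ψ` decreases and stays negative. Hence at the left endpoint `b` it either tends
to `−∞` or has a finite limit. In the latter case, if `b > 0`, Picard–Lindelöf started from that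
limit continues `ψ` past `b`, against maximality. Finally `b = 0` is impossible because the
coefficient of `ψ` in the equation blows up like `1 / x`: there `(arctan ψ)' ≥ m / x` with `m > 0`,
which would make `arctan ψ` unbounded.
-/

open scoped Topology

section Monotone

theorem tendsto_atBot_or_exists_tendsto_nhdsGT_of_monotoneOn {α β : Type*}
    [LinearOrder α] [TopologicalSpace α] [OrderTopology α]
    [ConditionallyCompleteLinearOrder β] [TopologicalSpace β] [OrderTopology β]
    {f : α → β} {a b : α} (hne : (Ioo a b).Nonempty) (hf : MonotoneOn f (Ioo a b)) :
    Tendsto f (𝓝[>] a) atBot ∨ ∃ l, Tendsto f (𝓝[>] a) (𝓝 l) := by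
  by_cases hbdd : BddBelow (f '' Ioo a b)
  · exact .inr ⟨_, hf.tendsto_nhdsWithin_Ioo_right hne hbdd⟩
  · refine .inl (tendsto_atBot.2 fun M => ?_)
    obtain ⟨_, ⟨y, hy, rfl⟩, hyM⟩ := not_bddBelow_iff.1 hbdd M
    filter_upwards [Ioo_mem_nhdsGT hy.1] with x hx
    exact (hf ⟨hx.1, hx.2.trans hy.2⟩ hy hx.2.le).trans hyM.le

theorem neg_of_forall_eq_zero_deriv_pos {f f' : ℝ → ℝ} {a b : ℝ}
    (hf : ∀ x ∈ Icc a b, HasDerivAt f (f' x) x) (hf' : ∀ x ∈ Icc a b, f x = 0 → 0 < f' x)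
    (hab : a ≤ b) (hb : f b < 0) : f a < 0 := by
  by_contra! ha
  have hb_nonneg : -f b ≤ 0 :=
    image_le_of_deriv_right_lt_deriv_boundary (B := fun _ => 0) (B' := fun _ => 0)
      (fun x hx => (hf x hx).neg.continuousAt.continuousWithinAt)
      (fun x hx => (hf x (Ico_subset_Icc_self hx)).neg.hasDerivWithinAt)
      (neg_nonpos.2 ha) (fun x => hasDerivAt_const x 0)
      (fun x hx hx0 => neg_lt_zero.2 (hf' x (Ico_subset_Icc_self hx) (neg_eq_zero.1 hx0)))
      (right_mem_Icc.2 hab)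
  linarith

theorem tendsto_atBot_nhdsGT_zero_of_div_le_deriv {f f' : ℝ → ℝ} {a m : ℝ} (ha : 0 < a)
    (hm : 0 < m) (hf : ∀ x ∈ Ioc 0 a, HasDerivAt f (f' x) x)
    (hf' : ∀ x ∈ Ioc 0 a, m / x ≤ f' x) : Tendsto f (𝓝[>] 0) atBot := by
  have hderiv : ∀ x ∈ Ioc 0 a, HasDerivAt (fun y => f y - m * log y) (f' x - m * x⁻¹) x :=
    fun x hx => (hf x hx).sub ((hasDerivAt_log hx.1.ne').const_mul m)
  have hmono : MonotoneOn (fun y => f y - m * log y) (Ioc 0 a) := by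
    refine monotoneOn_of_hasDerivWithinAt_nonneg (convex_Ioc 0 a)
      (fun x hx => (hderiv x hx).continuousAt.continuousWithinAt)
      (fun x hx => (hderiv x (interior_subset hx)).hasDerivWithinAt) fun x hx => ?_
    rw [← div_eq_mul_inv]
    exact sub_nonneg.2 (hf' x (interior_subset hx))
  have hlog : Tendsto (fun x => f a - m * log a + m * log x) (𝓝[>] 0) atBot :=
    tendsto_atBot_add_const_left _ _ (tendsto_log_nhdsGT_zero.const_mul_atBot hm)
  refine tendsto_atBot_mono' _ ?_ hlog
  filter_upwards [Ioc_mem_nhdsGT ha] with x hx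
  linarith [hmono hx (right_mem_Ioc.2 ha) hx.2]

end Monotone

section Extension

variable {E : Type*} [NormedAddCommGroup E] [NormedSpace ℝ E]

theorem hasDerivAt_piecewise_Ioi {f g : ℝ → E} {b : ℝ} {e : E}
    (hg : HasDerivWithinAt g e (Iic b) b) (hf : ∀ᶠ x in 𝓝[>] b, DifferentiableAt ℝ f x)
    (hlim : Tendsto f (𝓝[>] b) (𝓝 (g b))) (hderiv : Tendsto (deriv f) (𝓝[>] b) (𝓝 e)) :
    HasDerivAt ((Ioi b).piecewise f g) e b := by
  have heq_left : EqOn ((Ioi b).piecewise f g) g (Iic b) := by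
    simpa only [compl_Ioi] using piecewise_eqOn_compl (Ioi b) f g
  have heq_right : EqOn ((Ioi b).piecewise f g) f (Ioi b) := piecewise_eqOn _ _ _
  have hleft : HasDerivWithinAt ((Ioi b).piecewise f g) e (Iic b) b :=
    hg.congr heq_left (heq_left self_mem_Iic)
  have heq_nhds : ∀ x ∈ Ioi b, (Ioi b).piecewise f g =ᶠ[𝓝 x] f := fun x hx =>
    heq_right.eventuallyEq_of_mem (Ioi_mem_nhds hx)
  have hright : HasDerivWithinAt ((Ioi b).piecewise f g) e (Ici b) b := by
    refine hasDerivWithinAt_Ici_of_tendsto_deriv (s := Ioi b ∩ {x | DifferentiableAt ℝ f x})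
      (fun x hx => ((heq_nhds x hx.1).differentiableAt_iff.2 hx.2).differentiableWithinAt)
      ?_ (inter_mem self_mem_nhdsWithin hf) (hderiv.congr' ?_)
    · rw [ContinuousWithinAt, heq_left self_mem_Iic]
      exact (hlim.congr' (heq_right.symm.eventuallyEq_of_mem self_mem_nhdsWithin)).mono_left
        (nhdsWithin_mono _ inter_subset_left)
    · filter_upwards [self_mem_nhdsWithin] with x hx using (heq_nhds x hx).deriv_eq.symm
  simpa only [Iic_union_Ici, hasDerivWithinAt_univ] using hleft.union hright

theorem exists_isIntegralCurveAt_of_contDiffAt [CompleteSpace E] {v : ℝ → E → E} {b : ℝ} {y : E}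
    (hv : ContDiffAt ℝ 1 (Function.uncurry v) (b, y)) :
    ∃ α : ℝ → E, α b = y ∧ IsIntegralCurveAt α v b := by
  -- Appending the time variable to the unknown makes the equation autonomous.
  have hV : ContDiffAt ℝ 1 (fun p : ℝ × E => ((1 : ℝ), Function.uncurry v p)) (b, y) :=
    contDiffAt_const.prodMk hv
  obtain ⟨γ, hγb, ε, hε, hγ⟩ :=
    hV.exists_forall_mem_closedBall_exists_eq_forall_mem_Ioo_hasDerivAt₀ b
  have hb : b ∈ Ioo (b - ε) (b + ε) := ⟨by linarith, by linarith⟩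
  have hfst : ∀ t ∈ Ioo (b - ε) (b + ε), HasDerivAt (fun s => (γ s).1) 1 t := fun t ht =>
    (hasFDerivAt_fst (𝕜 := ℝ) (p := γ t)).comp_hasDerivAt t (hγ t ht)
  have hsnd : ∀ t ∈ Ioo (b - ε) (b + ε),
      HasDerivAt (fun s => (γ s).2) (v (γ t).1 (γ t).2) t := fun t ht =>
    (hasFDerivAt_snd (𝕜 := ℝ) (p := γ t)).comp_hasDerivAt t (hγ t ht)
  have htime : EqOn (fun s => (γ s).1) id (Ioo (b - ε) (b + ε)) :=
    isOpen_Ioo.eqOn_of_deriv_eq isPreconnected_Ioo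
      (fun t ht => (hfst t ht).differentiableAt.differentiableWithinAt) differentiableOn_id
      (fun t ht => by rw [(hfst t ht).deriv, deriv_id]) hb (by simp [hγb])
  refine ⟨fun s => (γ s).2, by simp [hγb], ?_⟩
  filter_upwards [isOpen_Ioo.mem_nhds hb] with t ht
  have htime_t : (γ t).1 = t := htime ht
  simpa only [htime_t] using hsnd t ht

theorem exists_eqOn_Ioi_isIntegralCurveAt [CompleteSpace E] {v : ℝ → E → E} {f : ℝ → E} {b : ℝ}
    {y : E} (hv : ContDiffAt ℝ 1 (Function.uncurry v) (b, y))
    (hf : ∀ᶠ x in 𝓝[>] b, HasDerivAt f (v x (f x)) x) (hlim : Tendsto f (𝓝[>] b) (𝓝 y)) :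
    ∃ g : ℝ → E, EqOn g f (Ioi b) ∧ IsIntegralCurveAt g v b := by
  obtain ⟨α, rfl, hα⟩ := exists_isIntegralCurveAt_of_contDiffAt hv
  set g := (Ioi b).piecewise f α
  have hgf : EqOn g f (Ioi b) := piecewise_eqOn _ _ _
  have hgα : EqOn g α (Iic b) := by
    simpa only [compl_Ioi] using piecewise_eqOn_compl (Ioi b) f α
  have hderiv : Tendsto (deriv f) (𝓝[>] b) (𝓝 (v b (α b))) := by
    have hslope : Tendsto (fun x => v x (f x)) (𝓝[>] b) (𝓝 (v b (α b))) :=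
      hv.continuousAt.tendsto.comp ((tendsto_id.mono_left nhdsWithin_le_nhds).prodMk_nhds hlim)
    exact hslope.congr' (hf.mono fun x hx => hx.deriv.symm)
  have hg : HasDerivAt g (v b (α b)) b :=
    hasDerivAt_piecewise_Ioi hα.self_of_nhds.hasDerivWithinAt
      (hf.mono fun x hx => hx.differentiableAt) hlim hderiv
  refine ⟨g, hgf, ?_⟩
  filter_upwards [hα, eventually_nhdsWithin_iff.1 hf] with x hαx hfx
  rcases lt_trichotomy x b with hx | rfl | hx
  · rw [hgα hx.le]
    exact hαx.congr_of_eventuallyEq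
      (hgα.eventuallyEq_of_mem (mem_of_superset (Iio_mem_nhds hx) Iio_subset_Iic_self))
  · rwa [hgα self_mem_Iic]
  · rw [hgf hx]
    exact (hfx hx).congr_of_eventuallyEq (hgf.eventuallyEq_of_mem (Ioi_mem_nhds hx))

/-- `f` solves `y' = v x y` on `(b, c]` and is not the restriction of a solution on a larger
interval `(b', c]` with `a ≤ b' < b`. Derivatives are two-sided, also at `c`. -/
structure IsLeftMaximalSolution (v : ℝ → E → E) (f : ℝ → E) (a b c : ℝ) : Prop where
  hasDerivAt : ∀ x ∈ Ioc b c, HasDerivAt f (v x (f x)) x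
  not_eqOn : ∀ g : ℝ → E, ∀ b' ∈ Ico a b,
    (∀ x ∈ Ioc b' c, HasDerivAt g (v x (g x)) x) → ¬ EqOn g f (Ioc b c)

namespace IsLeftMaximalSolution

theorem not_tendsto_nhds [CompleteSpace E] {v : ℝ → E → E} {f : ℝ → E} {a b c : ℝ} {y : E}
    (hf : IsLeftMaximalSolution v f a b c) (hab : a < b) (hbc : b < c)
    (hv : ContDiffAt ℝ 1 (Function.uncurry v) (b, y)) : ¬ Tendsto f (𝓝[>] b) (𝓝 y) := by
  intro hlim
  obtain ⟨g, hgf, hg⟩ := exists_eqOn_Ioi_isIntegralCurveAt hv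
    (mem_of_superset (Ioc_mem_nhdsGT hbc) hf.hasDerivAt) hlim
  obtain ⟨b', hb', hsub⟩ :=
    (mem_nhdsLE_iff_exists_mem_Ico_Ioc_subset hab).1 (mem_nhdsWithin_of_mem_nhds hg)
  refine hf.not_eqOn g b' hb' (fun x hx => ?_) (hgf.mono Ioc_subset_Ioi_self)
  rcases le_or_gt x b with hxb | hbx
  · exact hsub ⟨hx.1, hxb⟩
  · rw [hgf hbx]
    exact (hf.hasDerivAt x ⟨hbx, hx.2⟩).congr_of_eventuallyEq
      (hgf.eventuallyEq_of_mem (Ioi_mem_nhds hbx))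

theorem tendsto_atBot_of_monotoneOn {v : ℝ → ℝ → ℝ} {f : ℝ → ℝ} {a b c : ℝ}
    (hf : IsLeftMaximalSolution v f a b c) (hab : a < b) (hbc : b < c)
    (hmono : MonotoneOn f (Ioc b c)) (hv : ∀ y, ContDiffAt ℝ 1 (Function.uncurry v) (b, y)) :
    Tendsto f (𝓝[>] b) atBot :=
  (tendsto_atBot_or_exists_tendsto_nhdsGT_of_monotoneOn (nonempty_Ioo.2 hbc)
    (hmono.mono Ioo_subset_Ioc_self)).resolve_right
      fun ⟨y, hy⟩ => hf.not_tendsto_nhds hab hbc (hv y) hy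

end IsLeftMaximalSolution

end Extension

section TranslatorEquation

/-- The right-hand side of the reduced translator equation, for general coefficients: a weight `w`
and the reciprocal `q` of the nullcline (the paper's `η`). -/
def translatorSlope (w q : ℝ → ℝ) (x y : ℝ) : ℝ :=
  w x * (1 + y ^ 2) * (1 - q x * y)

variable {w q f : ℝ → ℝ} {b c m : ℝ}

theorem translatorSlope_pos {x y : ℝ} (hw : 0 < w x) (hq : 0 ≤ q x) (hy : y ≤ 0) :
    0 < translatorSlope w q x y := by
  have : 0 < 1 - q x * y := by linarith [mul_nonpos_of_nonneg_of_nonpos hq hy]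
  unfold translatorSlope
  positivity

theorem contDiffAt_uncurry_translatorSlope {x : ℝ} (hw : ContDiffAt ℝ 1 w x)
    (hq : ContDiffAt ℝ 1 q x) (y : ℝ) :
    ContDiffAt ℝ 1 (Function.uncurry (translatorSlope w q)) (x, y) := by
  have hw' : ContDiffAt ℝ 1 (fun p : ℝ × ℝ => w p.1) (x, y) := hw.comp (x, y) contDiffAt_fst
  have hq' : ContDiffAt ℝ 1 (fun p : ℝ × ℝ => q p.1) (x, y) := hq.comp (x, y) contDiffAt_fst
  exact (hw'.mul (contDiffAt_const.add (contDiffAt_snd.pow 2))).mul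
    (contDiffAt_const.sub (hq'.mul contDiffAt_snd))

theorem neg_of_hasDerivAt_translatorSlope
    (hf : ∀ x ∈ Ioc b c, HasDerivAt f (translatorSlope w q x (f x)) x)
    (hw : ∀ x ∈ Ioc b c, 0 < w x) (hfc : f c < 0) : ∀ x ∈ Ioc b c, f x < 0 := by
  intro x hx
  have hsub : Icc x c ⊆ Ioc b c := fun y hy => ⟨hx.1.trans_le hy.1, hy.2⟩
  refine neg_of_forall_eq_zero_deriv_pos (fun y hy => hf y (hsub hy)) (fun y hy hfy => ?_) hx.2 hfc
  simpa [translatorSlope, hfy] using hw y (hsub hy)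

theorem strictMonoOn_of_hasDerivAt_translatorSlope
    (hf : ∀ x ∈ Ioc b c, HasDerivAt f (translatorSlope w q x (f x)) x)
    (hw : ∀ x ∈ Ioc b c, 0 < w x) (hq : ∀ x ∈ Ioc b c, 0 ≤ q x) (hfc : f c < 0) :
    StrictMonoOn f (Ioc b c) := by
  refine strictMonoOn_of_hasDerivWithinAt_pos (convex_Ioc b c)
    (fun x hx => (hf x hx).continuousAt.continuousWithinAt)
    (fun x hx => (hf x (interior_subset hx)).hasDerivWithinAt) fun x hx => ?_
  have hx := interior_subset hx
  have hfx := neg_of_hasDerivAt_translatorSlope hf hw hfc x hx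
  exact translatorSlope_pos (hw x hx) (hq x hx) hfx.le

theorem pos_of_div_le_mul {r s x : ℝ} (hm : 0 < m) (hx : 0 < x) (hr : 0 ≤ r) (h : m / x ≤ r * s) :
    0 < s :=
  pos_of_mul_pos_right ((div_pos hm hx).trans_le h) hr

theorem not_forall_hasDerivAt_translatorSlope_Ioc_zero (hc : 0 < c) (hm : 0 < m)
    (hw : ∀ x ∈ Ioc 0 c, 0 < w x) (hwq : ∀ x ∈ Ioc 0 c, m / x ≤ w x * q x)
    (hfc : f c < 0) : ¬ ∀ x ∈ Ioc 0 c, HasDerivAt f (translatorSlope w q x (f x)) x := by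
  intro hf
  have hq : ∀ x ∈ Ioc 0 c, 0 ≤ q x := fun x hx =>
    (pos_of_div_le_mul hm hx.1 (hw x hx).le (hwq x hx)).le
  have hmono := (strictMonoOn_of_hasDerivAt_translatorSlope hf hw hq hfc).monotoneOn
  have hderiv : ∀ x ∈ Ioc 0 c, HasDerivAt (fun y => arctan (f y)) (w x * (1 - q x * f x)) x := by
    intro x hx
    convert (hf x hx).arctan using 1
    unfold translatorSlope
    field_simp
  have hbound : ∀ x ∈ Ioc 0 c, m * -f c / x ≤ w x * (1 - q x * f x) := by
    intro x hx
    have hfx : -f c ≤ -f x := neg_le_neg (hmono hx (right_mem_Ioc.2 hc) hx.2)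
    have hwx := hw x hx
    have hqx := hq x hx
    calc m * -f c / x = m / x * -f c := by ring
      _ ≤ w x * q x * -f x :=
        mul_le_mul (hwq x hx) hfx (by linarith) (by positivity)
      _ ≤ w x * (1 - q x * f x) := by linarith
  have hlim : Tendsto (fun x => arctan (f x)) (𝓝[>] 0) atBot :=
    tendsto_atBot_nhdsGT_zero_of_div_le_deriv hc (mul_pos hm (neg_pos.2 hfc)) hderiv hbound
  obtain ⟨x, hx⟩ := (hlim.eventually_le_atBot (-(π / 2))).exists
  exact hx.not_gt (neg_pi_div_two_lt_arctan _)

theorem stmt_8_general (hw : ∀ x ∈ Ioc 0 c, 0 < w x) (hm : 0 < m)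
    (hwq : ∀ x ∈ Ioc 0 c, m / x ≤ w x * q x) (hw_smooth : ContDiffOn ℝ 1 w (Ioo 0 c))
    (hq_smooth : ContDiffOn ℝ 1 q (Ioo 0 c)) (hb : b ∈ Ico 0 c)
    (hf : IsLeftMaximalSolution (translatorSlope w q) f 0 b c) (hfc : f c < 0) :
    0 < b ∧ Tendsto f (𝓝[>] b) atBot := by
  have hq : ∀ x ∈ Ioc 0 c, 0 ≤ q x := fun x hx =>
    (pos_of_div_le_mul hm hx.1 (hw x hx).le (hwq x hx)).le
  have hb_pos : 0 < b := by
    refine hb.1.lt_of_ne ?_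
    rintro rfl
    exact not_forall_hasDerivAt_translatorSlope_Ioc_zero hb.2 hm hw hwq hfc hf.hasDerivAt
  have hsub : Ioc b c ⊆ Ioc 0 c := Ioc_subset_Ioc_left hb.1
  have hmono : StrictMonoOn f (Ioc b c) :=
    strictMonoOn_of_hasDerivAt_translatorSlope hf.hasDerivAt (fun x hx => hw x (hsub hx))
      (fun x hx => hq x (hsub hx)) hfc
  have hnhds : Ioo 0 c ∈ 𝓝 b := Ioo_mem_nhds hb_pos hb.2
  exact ⟨hb_pos, hf.tendsto_atBot_of_monotoneOn hb_pos hb.2 hmono.monotoneOn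
    (contDiffAt_uncurry_translatorSlope (hw_smooth.contDiffAt hnhds) (hq_smooth.contDiffAt hnhds))⟩

end TranslatorEquation

section Coefficients

theorem contDiff_div_one_add_sq (k : ℝ) : ContDiff ℝ 1 fun x : ℝ => k / (1 + x ^ 2) :=
  contDiff_const.div (by fun_prop) fun x => by positivity

theorem contDiffOn_sub_sq_div_mul {k : ℝ} (hk : k ≠ 0) (K : ℝ) :
    ContDiffOn ℝ 1 (fun x : ℝ => (K - x ^ 2) / (k * x)) {0}ᶜ :=
  ContDiffOn.div (by fun_prop) (by fun_prop) fun _ hx => mul_ne_zero hk hx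

theorem div_le_div_one_add_sq_mul_sub_sq_div {k K c : ℝ} (hk : k ≠ 0) (hK : c ^ 2 ≤ K) :
    ∀ x ∈ Ioc 0 c, (K - c ^ 2) / (1 + c ^ 2) / x ≤ k / (1 + x ^ 2) * ((K - x ^ 2) / (k * x)) := by
  intro x ⟨hx, hxc⟩
  have hsq : x ^ 2 ≤ c ^ 2 := pow_le_pow_left₀ hx.le hxc 2
  calc (K - c ^ 2) / (1 + c ^ 2) / x ≤ (K - x ^ 2) / (1 + x ^ 2) / x := by
        have : 0 ≤ K - x ^ 2 := by linarith
        gcongr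
    _ = k / (1 + x ^ 2) * ((K - x ^ 2) / (k * x)) := by field_simp

end Coefficients

/-- Fact (*₂): a maximal solution of the reduced translator ODE that is negative at some
`x₀ ∈ (0, √(2n−1))` blows down to `−∞`
at some positive point `x̄₁ ∈ (0, x₀)` as `x ↓ x̄₁`. Here `b` is the left endpoint of
the maximal interval of existence `(b, x₀]` of the solution `ψ`. -/
theorem stmt_8 (n : ℕ) (hn : 1 ≤ n) (ψ : ℝ → ℝ) (x₀ b : ℝ)
    (hx₀ : x₀ ∈ Set.Ioo 0 (Real.sqrt (2 * n - 1))) (hb : b ∈ Set.Ico 0 x₀)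
    (hsol : ∀ x ∈ Set.Ioc b x₀, HasDerivAt ψ
      ((2 * Real.sqrt (n + 1) / (1 + x ^ 2)) * (1 + ψ x ^ 2) *
        (1 - ((2 * n - 1 - x ^ 2) / (2 * Real.sqrt (n + 1) * x)) * ψ x)) x)
    (hmax : ∀ (φ : ℝ → ℝ), ∀ b' ∈ Set.Ico (0:ℝ) b,
      (∀ x ∈ Set.Ioc b' x₀, HasDerivAt φ
        ((2 * Real.sqrt (n + 1) / (1 + x ^ 2)) * (1 + φ x ^ 2) *
          (1 - ((2 * n - 1 - x ^ 2) / (2 * Real.sqrt (n + 1) * x)) * φ x)) x) →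
      ¬ Set.EqOn φ ψ (Set.Ioc b x₀))
    (hval : ψ x₀ < 0) :
    ∃ x₁ ∈ Set.Ioo (0:ℝ) x₀, x₁ = b ∧ Tendsto ψ (nhdsWithin x₁ (Set.Ioi x₁)) atBot := by
  have hk : 0 < 2 * √((n : ℝ) + 1) := by positivity
  have hK : x₀ ^ 2 < 2 * n - 1 := (lt_sqrt hx₀.1.le).1 hx₀.2
  have hm : 0 < (2 * n - 1 - x₀ ^ 2) / (1 + x₀ ^ 2) := div_pos (sub_pos.2 hK) (by positivity)
  obtain ⟨hb_pos, hlim⟩ := stmt_8_general (fun x _ => div_pos hk (by positivity)) hm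
    (div_le_div_one_add_sq_mul_sub_sq_div hk.ne' hK.le) (contDiff_div_one_add_sq _).contDiffOn
    ((contDiffOn_sub_sq_div_mul hk.ne' _).mono fun _ hx => hx.1.ne') hb ⟨hsol, hmax⟩ hval
  exact ⟨b, ⟨hb_pos, hb.2⟩, rfl, hlim⟩
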